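/- arXiv:2007.10968 — 2 statements merged into one kernel-verified Lean document; each statement's English description precedes it below -/
import Mathlib

section
/- Identity for the curvature function (Proposition 3.4(b), trivialized flat version): if (u, A) is a smooth solution of the YMH equations on U, then pointwise on U one has −(∂₁²F + ∂₂²F) = (2/ε²)·Re(i·D₁u·conj(D₂u)) − (1/ε²)|u|²·F. -/
open MeasureTheory Complex

noncomputable section

/-- Partial derivative in the first coordinate direction. -/
def pd1 {E : Type*} [NormedAddCommGroup E] [NormedSpace ℝ E] (f : ℝ × ℝ → E) (x : ℝ × ℝ) : E :=
  fderiv ℝ f x (1, 0)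

/-- Partial derivative in the second coordinate direction. -/
def pd2 {E : Type*} [NormedAddCommGroup E] [NormedSpace ℝ E] (f : ℝ × ℝ → E) (x : ℝ × ℝ) : E :=
  fderiv ℝ f x (0, 1)

/-- First covariant derivative `D₁f = ∂₁f − iA₁f`. -/
def D1 (A1 : ℝ × ℝ → ℝ) (f : ℝ × ℝ → ℂ) (x : ℝ × ℝ) : ℂ :=
  pd1 f x - Complex.I * (A1 x) * f x

/-- Second covariant derivative `D₂f = ∂₂f − iA₂f`. -/
def D2 (A2 : ℝ × ℝ → ℝ) (f : ℝ × ℝ → ℂ) (x : ℝ × ℝ) : ℂ :=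
  pd2 f x - Complex.I * (A2 x) * f x

/-- Curvature function `F = ∂₁A₂ − ∂₂A₁`. -/
def curv (A1 A2 : ℝ × ℝ → ℝ) (x : ℝ × ℝ) : ℝ := pd1 A2 x - pd2 A1 x

/-- `h = (1 − |u|²)/(2ε²)`. -/
def hfun (ε : ℝ) (u : ℝ × ℝ → ℂ) (x : ℝ × ℝ) : ℝ := (1 - ‖u x‖ ^ 2) / (2 * ε ^ 2)

/-- `σ₊ = D₁u + iD₂u`. -/
def sigP (u : ℝ × ℝ → ℂ) (A1 A2 : ℝ × ℝ → ℝ) (x : ℝ × ℝ) : ℂ :=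
  D1 A1 u x + Complex.I * D2 A2 u x

/-- `σ₋ = D₁u − iD₂u`. -/
def sigM (u : ℝ × ℝ → ℂ) (A1 A2 : ℝ × ℝ → ℝ) (x : ℝ × ℝ) : ℂ :=
  D1 A1 u x - Complex.I * D2 A2 u x

/-- The Yang--Mills--Higgs energy over the fundamental domain `[0,1]²`. -/
def energy (ε : ℝ) (u : ℝ × ℝ → ℂ) (A1 A2 : ℝ × ℝ → ℝ) : ℝ :=
  ∫ x in Set.Icc (0:ℝ) 1 ×ˢ Set.Icc (0:ℝ) 1,
    (ε ^ 2 * curv A1 A2 x ^ 2 + ‖D1 A1 u x‖ ^ 2 + ‖D2 A2 u x‖ ^ 2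
      + (1 - ‖u x‖ ^ 2) ^ 2 / (4 * ε ^ 2))

/-- `ℤ²`-periodicity. -/
def Periodic2 {E : Type*} (f : ℝ × ℝ → E) : Prop :=
  ∀ x : ℝ × ℝ, f (x.1 + 1, x.2) = f x ∧ f (x.1, x.2 + 1) = f x

/-- The Yang--Mills--Higgs equations on all of `ℝ²`. -/
def IsYMH (ε : ℝ) (u : ℝ × ℝ → ℂ) (A1 A2 : ℝ × ℝ → ℝ) : Prop :=
  (∀ x, -(D1 A1 (D1 A1 u) x + D2 A2 (D2 A2 u) x) = (hfun ε u x : ℂ) * u x) ∧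
  (∀ x, ε ^ 2 * pd2 (curv A1 A2) x = ((starRingEnd ℂ) (u x) * D1 A1 u x).im) ∧
  (∀ x, ε ^ 2 * pd1 (curv A1 A2) x = -((starRingEnd ℂ) (u x) * D2 A2 u x).im)

/-- The Yang--Mills--Higgs equations on an open set `U ⊆ ℝ²`. -/
def IsYMHOn (ε : ℝ) (u : ℝ × ℝ → ℂ) (A1 A2 : ℝ × ℝ → ℝ) (U : Set (ℝ × ℝ)) : Prop :=
  (∀ x ∈ U, -(D1 A1 (D1 A1 u) x + D2 A2 (D2 A2 u) x) = (hfun ε u x : ℂ) * u x) ∧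
  (∀ x ∈ U, ε ^ 2 * pd2 (curv A1 A2) x = ((starRingEnd ℂ) (u x) * D1 A1 u x).im) ∧
  (∀ x ∈ U, ε ^ 2 * pd1 (curv A1 A2) x = -((starRingEnd ℂ) (u x) * D2 A2 u x).im)

/-- Stability: nonnegative second variation of the energy along all smooth periodic
variations of the section and the connection. -/
def Stable (ε : ℝ) (u : ℝ × ℝ → ℂ) (A1 A2 : ℝ × ℝ → ℝ) : Prop :=
  ∀ v : ℝ × ℝ → ℂ, ∀ a1 a2 : ℝ × ℝ → ℝ,
    ContDiff ℝ (⊤ : ℕ∞) v → Periodic2 v → ContDiff ℝ (⊤ : ℕ∞) a1 → Periodic2 a1 →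
    ContDiff ℝ (⊤ : ℕ∞) a2 → Periodic2 a2 →
    0 ≤ iteratedDeriv 2 (fun t : ℝ =>
      energy ε (fun x => u x + t • v x)
        (fun x => A1 x + t * a1 x) (fun x => A2 x + t * a2 x)) 0

/-! The two Maxwell equations say that, up to rotation by a right angle, `ε² ∇F` is the
supercurrent `j = Im (ū Du)`, so `-ε² (∂₁²F + ∂₂²F)` is the curl `∂₁j₂ - ∂₂j₁`. The connection being
unitary, the product rule for `ū Du` holds with covariant derivatives; antisymmetrizing it leaves
`2 Im (conj (D₁u) D₂u)` and `Im (ū [D₁, D₂]u)`, and `[D₁, D₂] = -iF`. -/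

open scoped ComplexConjugate Topology

theorem smul_fderiv_apply_of_eventuallyEq {𝕜 E G : Type*} [NontriviallyNormedField 𝕜]
    [NormedAddCommGroup E] [NormedSpace 𝕜 E] [NormedAddCommGroup G] [NormedSpace 𝕜 G]
    {c : 𝕜} {f g : E → G} {x : E} (h : c • f =ᶠ[𝓝 x] g) (v : E) :
    c • fderiv 𝕜 f x v = fderiv 𝕜 g x v := by
  rw [← h.fderiv_eq, fderiv_const_smul_field, Pi.smul_apply, smul_apply]

section CovariantDerivative

variable {E : Type*} [NormedAddCommGroup E] [NormedSpace ℝ E]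

/-- The covariant derivative `∂_v f - i a f` in the direction `v`, on a trivialized Hermitian line
bundle with unitary connection. Only the component `a` of the connection form in the direction `v`
enters, so `a` is a real function instead of a 1-form; then `D1 A1` and `D2 A2` are definitionally
the cases `v = (1, 0)` and `v = (0, 1)`. -/
def covDeriv (a : E → ℝ) (v : E) (f : E → ℂ) (x : E) : ℂ :=
  fderiv ℝ f x v - I * a x * f x

/-- The component in the direction `v` of the supercurrent `Im (ū Du)`, the source term of the
Maxwell equations; `a` is the component of the connection form in that direction. -/
def supercurrent (a : E → ℝ) (v : E) (u : E → ℂ) (x : E) : ℝ :=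
  (conj (u x) * covDeriv a v u x).im

variable {a b : E → ℝ} {f g u : E → ℂ} {x : E}

theorem hasFDerivAt_conj_mul (hf : DifferentiableAt ℝ f x) (hg : DifferentiableAt ℝ g x) :
    HasFDerivAt (fun y => conj (f y) * g y)
      (conj (f x) • fderiv ℝ g x + g x • (conjCLE : ℂ →L[ℝ] ℂ).comp (fderiv ℝ f x)) x :=
  ((conjCLE : ℂ →L[ℝ] ℂ).hasFDerivAt.comp x hf.hasFDerivAt).fun_mul hg.hasFDerivAt

-- The connection terms cancel because `i a` is purely imaginary.
theorem fderiv_conj_mul_eq_covDeriv (hf : DifferentiableAt ℝ f x) (hg : DifferentiableAt ℝ g x)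
    (a : E → ℝ) (v : E) :
    fderiv ℝ (fun y => conj (f y) * g y) x v =
      conj (covDeriv a v f x) * g x + conj (f x) * covDeriv a v g x := by
  rw [(hasFDerivAt_conj_mul hf hg).fderiv]
  simp only [covDeriv, add_apply, smul_apply, ContinuousLinearMap.comp_apply, smul_eq_mul,
    ContinuousLinearEquiv.coe_coe, conjCLE_apply, map_sub, map_mul, conj_I, conj_ofReal]
  ring

theorem hasFDerivAt_covDeriv (hf : ContDiffAt ℝ 2 f x) (ha : DifferentiableAt ℝ a x) (v : E) :
    HasFDerivAt (covDeriv a v f)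
      ((fderiv ℝ (fderiv ℝ f) x).flip v -
        ((I * a x) • fderiv ℝ f x + f x • I • ofRealCLM.comp (fderiv ℝ a x))) x := by
  have hf₁ : DifferentiableAt ℝ f x := hf.differentiableAt two_ne_zero
  have hf₂ : DifferentiableAt ℝ (fderiv ℝ f) x :=
    (hf.fderiv_right (m := 1) one_add_one_eq_two.le).differentiableAt one_ne_zero
  have hpartial : HasFDerivAt (fun y => fderiv ℝ f y v) ((fderiv ℝ (fderiv ℝ f) x).flip v) x := by
    simpa using hf₂.hasFDerivAt.clm_apply (hasFDerivAt_const v x)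
  have hcast : HasFDerivAt (fun y => (a y : ℂ)) (ofRealCLM.comp (fderiv ℝ a x)) x :=
    ofRealCLM.hasFDerivAt.comp x ha.hasFDerivAt
  exact hpartial.sub ((hcast.const_mul I).mul hf₁.hasFDerivAt)

theorem covDeriv_covDeriv (hf : ContDiffAt ℝ 2 f x) (hb : DifferentiableAt ℝ b x)
    (a : E → ℝ) (v w : E) :
    covDeriv a v (covDeriv b w f) x =
      fderiv ℝ (fderiv ℝ f) x v w - I * (b x * fderiv ℝ f x v + a x * fderiv ℝ f x w)
        - (I * fderiv ℝ b x v + a x * b x) * f x := by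
  rw [covDeriv, (hasFDerivAt_covDeriv hf hb w).fderiv]
  simp only [covDeriv, sub_apply, add_apply, smul_apply, ContinuousLinearMap.flip_apply,
    ContinuousLinearMap.comp_apply, smul_eq_mul, ofRealCLM_apply]
  linear_combination (a x * b x * f x : ℂ) * I_mul_I

theorem covDeriv_covDeriv_sub_comm (hf : ContDiffAt ℝ 2 f x) (ha : DifferentiableAt ℝ a x)
    (hb : DifferentiableAt ℝ b x) (v w : E) :
    covDeriv a v (covDeriv b w f) x - covDeriv b w (covDeriv a v f) x =
      -I * (fderiv ℝ b x v - fderiv ℝ a x w : ℝ) * f x := by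
  have hsymm : fderiv ℝ (fderiv ℝ f) x v w = fderiv ℝ (fderiv ℝ f) x w v :=
    hf.isSymmSndFDerivAt (by simp) v w
  rw [covDeriv_covDeriv hf hb, covDeriv_covDeriv hf ha, hsymm, ofReal_sub]
  ring

theorem fderiv_supercurrent (hu : ContDiffAt ℝ 2 u x) (hb : DifferentiableAt ℝ b x)
    (a : E → ℝ) (v w : E) :
    fderiv ℝ (supercurrent b w u) x v =
      (conj (covDeriv a v u x) * covDeriv b w u x
        + conj (u x) * covDeriv a v (covDeriv b w u) x).im := by
  have hu₁ : DifferentiableAt ℝ u x := hu.differentiableAt two_ne_zero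
  have hDu : DifferentiableAt ℝ (covDeriv b w u) x :=
    (hasFDerivAt_covDeriv hu hb w).differentiableAt
  have him : HasFDerivAt (supercurrent b w u)
      (imCLM.comp (fderiv ℝ (fun y => conj (u y) * covDeriv b w u y) x)) x :=
    imCLM.hasFDerivAt.comp x (hasFDerivAt_conj_mul hu₁ hDu).differentiableAt.hasFDerivAt
  rw [him.fderiv, ContinuousLinearMap.comp_apply, fderiv_conj_mul_eq_covDeriv hu₁ hDu a v,
    imCLM_apply]

theorem fderiv_supercurrent_sub_comm (hu : ContDiffAt ℝ 2 u x) (ha : DifferentiableAt ℝ a x)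
    (hb : DifferentiableAt ℝ b x) (v w : E) :
    fderiv ℝ (supercurrent b w u) x v - fderiv ℝ (supercurrent a v u) x w =
      2 * (conj (covDeriv a v u x) * covDeriv b w u x).im
        - ‖u x‖ ^ 2 * (fderiv ℝ b x v - fderiv ℝ a x w) := by
  have hswap : (conj (covDeriv b w u x) * covDeriv a v u x).im =
      -(conj (covDeriv a v u x) * covDeriv b w u x).im := by
    rw [← conj_im, map_mul, conj_conj, mul_comm]
  have hcomm : (conj (u x) * (covDeriv a v (covDeriv b w u) x
        - covDeriv b w (covDeriv a v u) x)).im =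
      -(‖u x‖ ^ 2 * (fderiv ℝ b x v - fderiv ℝ a x w)) := by
    rw [covDeriv_covDeriv_sub_comm hu ha hb, mul_left_comm, conj_mul', ← ofReal_pow,
      mul_assoc, ← ofReal_mul, neg_mul, neg_im, I_mul_im, ofReal_re, mul_comm]
  rw [mul_sub, sub_im] at hcomm
  rw [fderiv_supercurrent hu hb a, fderiv_supercurrent hu ha b, add_im, add_im, hswap]
  linarith

end CovariantDerivative

theorem laplacian_F_identity_general {ε : ℝ} (hε : ε ≠ 0) {u : ℝ × ℝ → ℂ} {A1 A2 : ℝ × ℝ → ℝ}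
    {x : ℝ × ℝ} (hu : ContDiffAt ℝ 2 u x) (hA1 : DifferentiableAt ℝ A1 x)
    (hA2 : DifferentiableAt ℝ A2 x)
    (hF2 : ∀ᶠ y in 𝓝 x, ε ^ 2 * pd2 (curv A1 A2) y = (conj (u y) * D1 A1 u y).im)
    (hF1 : ∀ᶠ y in 𝓝 x, ε ^ 2 * pd1 (curv A1 A2) y = -(conj (u y) * D2 A2 u y).im) :
    -(pd1 (pd1 (curv A1 A2)) x + pd2 (pd2 (curv A1 A2)) x) =
      2 / ε ^ 2 * (I * D1 A1 u x * conj (D2 A2 u x)).re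
        - 1 / ε ^ 2 * ‖u x‖ ^ 2 * curv A1 A2 x := by
  have hj2 : ε ^ 2 • pd1 (curv A1 A2) =ᶠ[𝓝 x] -supercurrent A2 (0, 1) u := hF1
  have hj1 : ε ^ 2 • pd2 (curv A1 A2) =ᶠ[𝓝 x] supercurrent A1 (1, 0) u := hF2
  have hF11 : ε ^ 2 * pd1 (pd1 (curv A1 A2)) x =
      fderiv ℝ (-supercurrent A2 (0, 1) u) x (1, 0) :=
    smul_fderiv_apply_of_eventuallyEq hj2 (1, 0)
  have hF22 : ε ^ 2 * pd2 (pd2 (curv A1 A2)) x = fderiv ℝ (supercurrent A1 (1, 0) u) x (0, 1) :=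
    smul_fderiv_apply_of_eventuallyEq hj1 (0, 1)
  rw [fderiv_neg, neg_apply] at hF11
  have hcurl : fderiv ℝ (supercurrent A2 (0, 1) u) x (1, 0)
        - fderiv ℝ (supercurrent A1 (1, 0) u) x (0, 1) =
      2 * (conj (D1 A1 u x) * D2 A2 u x).im - ‖u x‖ ^ 2 * curv A1 A2 x :=
    fderiv_supercurrent_sub_comm hu hA1 hA2 (1, 0) (0, 1)
  have hre : (I * D1 A1 u x * conj (D2 A2 u x)).re = (conj (D1 A1 u x) * D2 A2 u x).im := by
    rw [mul_assoc, I_mul_re, ← conj_im, map_mul, conj_conj]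
  rw [hre]
  field_simp
  linarith

/-- Identity for the curvature function `F` (Proposition 3.4(b), trivialized flat version). -/
theorem laplacian_F_identity
    (ε : ℝ) (hε : 0 < ε) (U : Set (ℝ × ℝ)) (hU : IsOpen U)
    (u : ℝ × ℝ → ℂ) (A1 A2 : ℝ × ℝ → ℝ)
    (hu : ContDiffOn ℝ (⊤ : ℕ∞) u U) (hA1 : ContDiffOn ℝ (⊤ : ℕ∞) A1 U) (hA2 : ContDiffOn ℝ (⊤ : ℕ∞) A2 U)
    (hYMH : IsYMHOn ε u A1 A2 U) :
    ∀ x ∈ U,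
      -(pd1 (pd1 (curv A1 A2)) x + pd2 (pd2 (curv A1 A2)) x) =
        2 / ε ^ 2 * (Complex.I * D1 A1 u x * (starRingEnd ℂ) (D2 A2 u x)).re
          - 1 / ε ^ 2 * ‖u x‖ ^ 2 * curv A1 A2 x := by
  intro x hx
  obtain ⟨-, hF2, hF1⟩ := hYMH
  have hUx : U ∈ 𝓝 x := hU.mem_nhds hx
  exact laplacian_F_identity_general hε.ne' (contDiffAt_infty.1 (hu.contDiffAt hUx) 2)
    ((hA1.contDiffAt hUx).differentiableAt (by simp))
    ((hA2.contDiffAt hUx).differentiableAt (by simp))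
    (Filter.eventually_of_mem hUx hF2) (Filter.eventually_of_mem hUx hF1)
end
end

section
/- Coderivative identity (Proposition 3.4(d), trivialized flat version): if (u, A) is a smooth solution of the YMH equations on U, then pointwise on U one has ∂₁(F − h) = (1/ε²)·Re(conj(u)·σ₊) and ∂₂(F − h) = (1/ε²)·Im(conj(u)·σ₊). -/
open MeasureTheory Complex

noncomputable section

/-!
The connection term `-iA_j u` is orthogonal to `u`, so `∂_j|u|² = 2 Re(ū D_j u)` and hence
`∂_j h = -ε⁻² Re(ū D_j u)`. The Maxwell equations express `∂_j F` through the imaginary parts of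
`ū D₁u` and `ū D₂u`, and the four terms assemble into the real and imaginary parts of `ū σ₊`.
-/

section CovariantDerivative

variable {E : Type*} [NormedAddCommGroup E] [NormedSpace ℝ E]

theorem re_conj_mul_sub_I_mul_ofReal_mul (w z : ℂ) (a : ℝ) :
    ((starRingEnd ℂ) w * (z - I * a * w)).re = ((starRingEnd ℂ) w * z).re := by
  simp only [mul_re, mul_im, sub_re, sub_im, conj_re, conj_im, I_re, I_im, ofReal_re, ofReal_im]
  ring

theorem fderiv_norm_sq_apply_eq_re_conj_mul {u : E → ℂ} {x : E} (hu : DifferentiableAt ℝ u x)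
    (v : E) (a : ℝ) :
    fderiv ℝ (fun y => ‖u y‖ ^ 2) x v =
      2 * ((starRingEnd ℂ) (u x) * (fderiv ℝ u x v - I * a * u x)).re := by
  rw [hu.hasFDerivAt.norm_sq.fderiv, re_conj_mul_sub_I_mul_ofReal_mul]
  simp [Complex.inner, mul_add, mul_comm]

end CovariantDerivative

section YangMillsHiggs

variable {u : ℝ × ℝ → ℂ} {A1 A2 : ℝ × ℝ → ℝ} {x : ℝ × ℝ}

theorem differentiableAt_hfun (ε : ℝ) (hu : DifferentiableAt ℝ u x) :
    DifferentiableAt ℝ (hfun ε u) x :=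
  ((hu.norm_sq ℝ).const_sub 1).mul_const _

theorem fderiv_hfun_apply (ε : ℝ) (hu : DifferentiableAt ℝ u x) (v : ℝ × ℝ) (a : ℝ) :
    fderiv ℝ (hfun ε u) x v =
      -(1 / ε ^ 2 * ((starRingEnd ℂ) (u x) * (fderiv ℝ u x v - I * a * u x)).re) := by
  have hfun_eq : hfun ε u = fun y => (1 - ‖u y‖ ^ 2) * (2 * ε ^ 2)⁻¹ := rfl
  rw [hfun_eq, fderiv_mul_const ((hu.norm_sq ℝ).const_sub 1), fderiv_const_sub]
  simp only [smul_apply, neg_apply, smul_eq_mul,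
    fderiv_norm_sq_apply_eq_re_conj_mul hu v a]
  ring

theorem pd1_hfun (ε : ℝ) (A1 : ℝ × ℝ → ℝ) (hu : DifferentiableAt ℝ u x) :
    pd1 (hfun ε u) x = -(1 / ε ^ 2 * ((starRingEnd ℂ) (u x) * D1 A1 u x).re) :=
  fderiv_hfun_apply ε hu (1, 0) (A1 x)

theorem pd2_hfun (ε : ℝ) (A2 : ℝ × ℝ → ℝ) (hu : DifferentiableAt ℝ u x) :
    pd2 (hfun ε u) x = -(1 / ε ^ 2 * ((starRingEnd ℂ) (u x) * D2 A2 u x).re) :=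
  fderiv_hfun_apply ε hu (0, 1) (A2 x)

theorem differentiableAt_curv (hA1 : ContDiffAt ℝ 2 A1 x) (hA2 : ContDiffAt ℝ 2 A2 x) :
    DifferentiableAt ℝ (curv A1 A2) x := by
  have hA1' : DifferentiableAt ℝ (fderiv ℝ A1) x :=
    (hA1.fderiv_right (m := 1) (by norm_num)).differentiableAt one_ne_zero
  have hA2' : DifferentiableAt ℝ (fderiv ℝ A2) x :=
    (hA2.fderiv_right (m := 1) (by norm_num)).differentiableAt one_ne_zero
  exact (hA2'.clm_apply (differentiableAt_const _)).sub
    (hA1'.clm_apply (differentiableAt_const _))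

theorem re_conj_mul_sigP (w : ℂ) (u : ℝ × ℝ → ℂ) (A1 A2 : ℝ × ℝ → ℝ) (x : ℝ × ℝ) :
    ((starRingEnd ℂ) w * sigP u A1 A2 x).re =
      ((starRingEnd ℂ) w * D1 A1 u x).re - ((starRingEnd ℂ) w * D2 A2 u x).im := by
  rw [sigP, mul_add, mul_left_comm, add_re, I_mul_re, sub_eq_add_neg]

theorem im_conj_mul_sigP (w : ℂ) (u : ℝ × ℝ → ℂ) (A1 A2 : ℝ × ℝ → ℝ) (x : ℝ × ℝ) :
    ((starRingEnd ℂ) w * sigP u A1 A2 x).im =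
      ((starRingEnd ℂ) w * D1 A1 u x).im + ((starRingEnd ℂ) w * D2 A2 u x).re := by
  rw [sigP, mul_add, mul_left_comm, add_im, I_mul_im]

theorem coderivative_identity_general {ε : ℝ} (hε : ε ≠ 0) (hu : DifferentiableAt ℝ u x)
    (hF : DifferentiableAt ℝ (curv A1 A2) x)
    (maxwell2 : ε ^ 2 * pd2 (curv A1 A2) x = ((starRingEnd ℂ) (u x) * D1 A1 u x).im)
    (maxwell1 : ε ^ 2 * pd1 (curv A1 A2) x = -((starRingEnd ℂ) (u x) * D2 A2 u x).im) :
    pd1 (fun y => curv A1 A2 y - hfun ε u y) x =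
        1 / ε ^ 2 * ((starRingEnd ℂ) (u x) * sigP u A1 A2 x).re ∧
      pd2 (fun y => curv A1 A2 y - hfun ε u y) x =
        1 / ε ^ 2 * ((starRingEnd ℂ) (u x) * sigP u A1 A2 x).im := by
  have fderiv_sub_apply (v : ℝ × ℝ) : fderiv ℝ (fun y => curv A1 A2 y - hfun ε u y) x v =
      fderiv ℝ (curv A1 A2) x v - fderiv ℝ (hfun ε u) x v := by
    rw [fderiv_fun_sub hF (differentiableAt_hfun ε hu), sub_apply]
  constructor
  · calc pd1 (fun y => curv A1 A2 y - hfun ε u y) x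
        = pd1 (curv A1 A2) x - pd1 (hfun ε u) x := fderiv_sub_apply (1, 0)
      _ = 1 / ε ^ 2 * (ε ^ 2 * pd1 (curv A1 A2) x + ((starRingEnd ℂ) (u x) * D1 A1 u x).re) := by
        rw [pd1_hfun ε A1 hu]
        field_simp
        ring
      _ = 1 / ε ^ 2 * ((starRingEnd ℂ) (u x) * sigP u A1 A2 x).re := by
        rw [maxwell1, re_conj_mul_sigP, neg_add_eq_sub]
  · calc pd2 (fun y => curv A1 A2 y - hfun ε u y) x
        = pd2 (curv A1 A2) x - pd2 (hfun ε u) x := fderiv_sub_apply (0, 1)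
      _ = 1 / ε ^ 2 * (ε ^ 2 * pd2 (curv A1 A2) x + ((starRingEnd ℂ) (u x) * D2 A2 u x).re) := by
        rw [pd2_hfun ε A2 hu]
        field_simp
        ring
      _ = 1 / ε ^ 2 * ((starRingEnd ℂ) (u x) * sigP u A1 A2 x).im := by
        rw [maxwell2, im_conj_mul_sigP]

end YangMillsHiggs

/-- Coderivative identity (Proposition 3.4(d), trivialized flat version). -/
theorem coderivative_identity
    (ε : ℝ) (hε : 0 < ε) (U : Set (ℝ × ℝ)) (hU : IsOpen U)
    (u : ℝ × ℝ → ℂ) (A1 A2 : ℝ × ℝ → ℝ)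
    (hu : ContDiffOn ℝ (⊤ : ℕ∞) u U) (hA1 : ContDiffOn ℝ (⊤ : ℕ∞) A1 U) (hA2 : ContDiffOn ℝ (⊤ : ℕ∞) A2 U)
    (hYMH : IsYMHOn ε u A1 A2 U) :
    ∀ x ∈ U,
      pd1 (fun y => curv A1 A2 y - hfun ε u y) x =
        1 / ε ^ 2 * ((starRingEnd ℂ) (u x) * sigP u A1 A2 x).re ∧
      pd2 (fun y => curv A1 A2 y - hfun ε u y) x =
        1 / ε ^ 2 * ((starRingEnd ℂ) (u x) * sigP u A1 A2 x).im := by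
  intro x hx
  have hmem : U ∈ nhds x := hU.mem_nhds hx
  exact coderivative_identity_general hε.ne' ((hu.contDiffAt hmem).differentiableAt (by simp))
    (differentiableAt_curv (contDiffAt_infty.1 (hA1.contDiffAt hmem) 2)
      (contDiffAt_infty.1 (hA2.contDiffAt hmem) 2))
    (hYMH.2.1 x hx) (hYMH.2.2 x hx)
end
end
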